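/- Let k ≥ 1 and let σ be a permutation of {1,…,k}. Suppose h_μ is an uncovered slope index which is not the largest element of I_v ∪ I_s, and let h_{μ+1} be the next element of I_v ∪ I_s after h_μ. Then there exists an index h with h_μ < h < h_{μ+1} such that h ∈ I_p, i.e., the point (σ^{−1}(h), h) is a peak. -/

import Mathlib

/-- The extension `σ̃` of a permutation `σ` of `{1,…,k}` to `{0,1,…,k+1}`, with
`σ̃(0) = 0` and `σ̃(k+1) = k+1`.  Here `σ : Equiv.Perm (Fin k)` acts on `{0,…,k-1}`,
shifted by one. -/
def sigmaTilde (k : ℕ) (σ : Equiv.Perm (Fin k)) (j : ℕ) : ℕ :=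
  if h : 1 ≤ j ∧ j ≤ k then ((σ ⟨j - 1, by omega⟩ : Fin k) : ℕ) + 1 else j

/-- The point `(j, σ(j))` is a *peak*: `σ(j) < min {σ̃(j-1), σ̃(j+1)}`. -/
def IsPeakAt (k : ℕ) (σ : Equiv.Perm (Fin k)) (j : ℕ) : Prop :=
  sigmaTilde k σ j < min (sigmaTilde k σ (j - 1)) (sigmaTilde k σ (j + 1))

/-- The point `(j, σ(j))` is a *valley*: `σ(j) > max {σ̃(j-1), σ̃(j+1)}`. -/
def IsValleyAt (k : ℕ) (σ : Equiv.Perm (Fin k)) (j : ℕ) : Prop :=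
  max (sigmaTilde k σ (j - 1)) (sigmaTilde k σ (j + 1)) < sigmaTilde k σ j

/-- The point `(j, σ(j))` is a *ladder*: `σ(j) - 1 ∈ {σ̃(j-1), σ̃(j+1)}` and the point is
not a valley. -/
def IsLadderAt (k : ℕ) (σ : Equiv.Perm (Fin k)) (j : ℕ) : Prop :=
  (sigmaTilde k σ j - 1 = sigmaTilde k σ (j - 1) ∨
    sigmaTilde k σ j - 1 = sigmaTilde k σ (j + 1)) ∧ ¬IsValleyAt k σ j

instance (k : ℕ) (σ : Equiv.Perm (Fin k)) (j : ℕ) : Decidable (IsPeakAt k σ j) := by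
  unfold IsPeakAt; infer_instance

instance (k : ℕ) (σ : Equiv.Perm (Fin k)) (j : ℕ) : Decidable (IsValleyAt k σ j) := by
  unfold IsValleyAt; infer_instance

instance (k : ℕ) (σ : Equiv.Perm (Fin k)) (j : ℕ) : Decidable (IsLadderAt k σ j) := by
  unfold IsLadderAt; infer_instance

/-- `ℓ(σ)`: the number of `j ∈ {1,…,k}` such that `(j, σ(j))` is a ladder. -/
def ladderCount (k : ℕ) (σ : Equiv.Perm (Fin k)) : ℕ :=
  ((Finset.Icc 1 k).filter fun j => IsLadderAt k σ j).card

/-- The degree of a permutation: `deg(σ) := k - ℓ(σ)`. -/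
def permDegree (k : ℕ) (σ : Equiv.Perm (Fin k)) : ℕ := k - ladderCount k σ

/-- The entries of the matrix `M(σ)`, with row and column indices `i, j ∈ {1,…,k+1}`:
`M(σ)_{ij} = 1` if `σ̃(j-1) < i ≤ σ̃(j)`, `M(σ)_{ij} = -1` if `σ̃(j) < i ≤ σ̃(j-1)`,
and `0` otherwise. -/
def MmatN (k : ℕ) (σ : Equiv.Perm (Fin k)) (i j : ℕ) : ℤ :=
  if sigmaTilde k σ (j - 1) < i ∧ i ≤ sigmaTilde k σ j then 1
  else if sigmaTilde k σ j < i ∧ i ≤ sigmaTilde k σ (j - 1) then -1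
  else 0

/-- `t(j)`: the top (smallest row index) of the tower of nonzero entries in column `j`. -/
noncomputable def towerTop (k : ℕ) (σ : Equiv.Perm (Fin k)) (j : ℕ) : ℕ :=
  sInf {i : ℕ | MmatN k σ i j ≠ 0}

/-- `b(j)`: the bottom (largest row index) of the tower of nonzero entries in column `j`. -/
noncomputable def towerBot (k : ℕ) (σ : Equiv.Perm (Fin k)) (j : ℕ) : ℕ :=
  sSup {i : ℕ | MmatN k σ i j ≠ 0}

/-- The set `I_p` of peak indices `i ∈ {1,…,k}` (the point `(σ⁻¹(i), i)` is a peak). -/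
def peakSet (k : ℕ) (σ : Equiv.Perm (Fin k)) : Set ℕ :=
  {i | 1 ≤ i ∧ i ≤ k ∧ IsPeakAt k σ (sigmaTilde k σ⁻¹ i)}

/-- The set `I_v` of valley indices `i ∈ {1,…,k}` (the point `(σ⁻¹(i), i)` is a valley). -/
def valleySet (k : ℕ) (σ : Equiv.Perm (Fin k)) : Set ℕ :=
  {i | 1 ≤ i ∧ i ≤ k ∧ IsValleyAt k σ (sigmaTilde k σ⁻¹ i)}

/-- The set `I_s` of slope indices `i ∈ {1,…,k}` (the point `(σ⁻¹(i), i)` is neither a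
peak, nor a valley, nor a ladder). -/
def slopeSet (k : ℕ) (σ : Equiv.Perm (Fin k)) : Set ℕ :=
  {i | 1 ≤ i ∧ i ≤ k ∧ ¬IsPeakAt k σ (sigmaTilde k σ⁻¹ i) ∧
    ¬IsValleyAt k σ (sigmaTilde k σ⁻¹ i) ∧ ¬IsLadderAt k σ (sigmaTilde k σ⁻¹ i)}

/-- The pivot column `c(i)`: for a non-peak index `i` this is the unique column `j` with
`b(j) = i`, except that for a valley index `i` (where both columns `σ̃⁻¹(i)` and
`σ̃⁻¹(i)+1` have bottom `i`) it is the one of these two columns with the smaller top. -/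
noncomputable def pivotCol (k : ℕ) (σ : Equiv.Perm (Fin k)) (i : ℕ) : ℕ :=
  if IsValleyAt k σ (sigmaTilde k σ⁻¹ i) then
    if towerTop k σ (sigmaTilde k σ⁻¹ i) < towerTop k σ (sigmaTilde k σ⁻¹ i + 1) then
      sigmaTilde k σ⁻¹ i
    else sigmaTilde k σ⁻¹ i + 1
  else sInf {j : ℕ | towerBot k σ j = i}

/-- The next element of `I_v ∪ I_s` strictly after `h`. -/
noncomputable def nextVS (k : ℕ) (σ : Equiv.Perm (Fin k)) (h : ℕ) : ℕ :=
  sInf {h' : ℕ | h' ∈ valleySet k σ ∪ slopeSet k σ ∧ h < h'}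

/-- The set `I_cs` of covered slope indices: slope indices `h` such that there is a next
element `h'` of `I_v ∪ I_s` after `h` and `t(c(h')) ≤ h`. -/
def coveredSlopeSet (k : ℕ) (σ : Equiv.Perm (Fin k)) : Set ℕ :=
  {h | h ∈ slopeSet k σ ∧ (∃ h' ∈ valleySet k σ ∪ slopeSet k σ, h < h') ∧
    towerTop k σ (pivotCol k σ (nextVS k σ h)) ≤ h}

/-- The set `I_us` of uncovered slope indices. -/
def uncoveredSlopeSet (k : ℕ) (σ : Equiv.Perm (Fin k)) : Set ℕ :=
  slopeSet k σ \ coveredSlopeSet k σ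

/-!
Let `n` be a valley or slope index and let `t` be the top of its pivot column, so that `n` and
`t - 1` are neighbours in the word `σ̃(0) σ̃(1) ⋯`. Then `t < n`: the two towers resting on a
valley have different tops, and a slope index with `t = n` would be a ladder index. If `t` is
neither a valley nor a slope index, then it is a peak index or a ladder index; in the latter case
`t - 1` has the two larger neighbours `t` and `n`, so it is a peak index. When `n` is the next
valley or slope index after an uncovered slope index `h`, we have `h < t < n`, so this applies to
`t`, and `t - 1 ≠ h` if `t - 1` is a peak index.
-/

section Development

variable {k : ℕ} {σ : Equiv.Perm (Fin k)}

@[simp]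
theorem sigmaTilde_zero : sigmaTilde k σ 0 = 0 := by
  simp [sigmaTilde]

@[simp]
theorem sigmaTilde_sigmaTilde_inv (i : ℕ) : sigmaTilde k σ (sigmaTilde k σ⁻¹ i) = i := by
  by_cases hi : 1 ≤ i ∧ i ≤ k
  · have hpos : sigmaTilde k σ⁻¹ i = (σ⁻¹ ⟨i - 1, by omega⟩ : Fin k) + 1 := dif_pos hi
    rw [hpos, sigmaTilde, dif_pos ⟨by omega, by omega⟩]
    simp [Nat.sub_add_cancel hi.1]
  · simp [sigmaTilde, hi]

@[simp]
theorem sigmaTilde_inv_sigmaTilde (j : ℕ) : sigmaTilde k σ⁻¹ (sigmaTilde k σ j) = j := by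
  simpa only [inv_inv] using sigmaTilde_sigmaTilde_inv (σ := σ⁻¹) j

variable (k σ) in
theorem sigmaTilde_injective : Function.Injective (sigmaTilde k σ) :=
  Function.LeftInverse.injective sigmaTilde_inv_sigmaTilde

/-- The values `a` and `b` of `σ̃` are *neighbours*: they stand at consecutive positions of the
word `σ̃(0) σ̃(1) σ̃(2) ⋯`. Peaks and ladders are described by the neighbours of a value, and
the tower of a column is spanned by two neighbours. Both orders are allowed explicitly, so that no
truncated subtraction occurs at position `0`. -/
def IsNeighborValue (k : ℕ) (σ : Equiv.Perm (Fin k)) (a b : ℕ) : Prop :=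
  sigmaTilde k σ⁻¹ b = sigmaTilde k σ⁻¹ a + 1 ∨ sigmaTilde k σ⁻¹ a = sigmaTilde k σ⁻¹ b + 1

theorem IsNeighborValue.symm {a b : ℕ} (hab : IsNeighborValue k σ a b) :
    IsNeighborValue k σ b a :=
  Or.symm hab

variable (k σ) in
theorem isNeighborValue_sigmaTilde_succ (j : ℕ) :
    IsNeighborValue k σ (sigmaTilde k σ j) (sigmaTilde k σ (j + 1)) := by
  simp [IsNeighborValue]

theorem isNeighborValue_iff {a b : ℕ} (ha : a ≠ 0) :
    IsNeighborValue k σ a b ↔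
      b = sigmaTilde k σ (sigmaTilde k σ⁻¹ a - 1) ∨
        b = sigmaTilde k σ (sigmaTilde k σ⁻¹ a + 1) := by
  have hpos : sigmaTilde k σ⁻¹ a ≠ 0 := fun h0 =>
    ha (sigmaTilde_injective k σ⁻¹ (h0.trans sigmaTilde_zero.symm))
  have hb (j : ℕ) : b = sigmaTilde k σ j ↔ sigmaTilde k σ⁻¹ b = j :=
    ⟨by rintro rfl; simp, by rintro rfl; simp⟩
  rw [IsNeighborValue, hb, hb]
  omega

theorem isLadderAt_iff_isNeighborValue {i : ℕ} (hi : i ≠ 0) :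
    IsLadderAt k σ (sigmaTilde k σ⁻¹ i) ↔
      IsNeighborValue k σ i (i - 1) ∧ ¬IsValleyAt k σ (sigmaTilde k σ⁻¹ i) := by
  rw [IsLadderAt, sigmaTilde_sigmaTilde_inv, isNeighborValue_iff hi]

theorem IsPeakAt.ne_zero {j : ℕ} (hj : IsPeakAt k σ j) : j ≠ 0 := by
  rintro rfl
  simp [IsPeakAt] at hj

theorem isPeakAt_of_isNeighborValue {i a b : ℕ} (ha : IsNeighborValue k σ i a)
    (hb : IsNeighborValue k σ i b) (hab : a ≠ b) (hia : i < a) (hib : i < b) :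
    IsPeakAt k σ (sigmaTilde k σ⁻¹ i) := by
  have hi : i ≠ 0 := by
    rintro rfl
    simp only [IsNeighborValue, sigmaTilde_zero, zero_add] at ha hb
    exact hab (sigmaTilde_injective k σ⁻¹ (by omega))
  rw [isNeighborValue_iff hi] at ha hb
  rw [IsPeakAt, sigmaTilde_sigmaTilde_inv]
  omega

theorem mem_peakSet_of_isNeighborValue {i a b : ℕ} (hik : i ≤ k)
    (ha : IsNeighborValue k σ i a) (hb : IsNeighborValue k σ i b) (hab : a ≠ b)
    (hia : i < a) (hib : i < b) : i ∈ peakSet k σ := by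
  have hpeak := isPeakAt_of_isNeighborValue ha hb hab hia hib
  refine ⟨Nat.one_le_iff_ne_zero.2 ?_, hik, hpeak⟩
  rintro rfl
  exact hpeak.ne_zero sigmaTilde_zero

section Towers

variable (k σ)

theorem setOf_MmatN_ne_zero (j : ℕ) :
    {i : ℕ | MmatN k σ i j ≠ 0} =
      Set.Ioc (min (sigmaTilde k σ (j - 1)) (sigmaTilde k σ j))
        (max (sigmaTilde k σ (j - 1)) (sigmaTilde k σ j)) := by
  ext i
  simp only [MmatN, Set.mem_ofPred_eq, Set.mem_Ioc]
  split_ifs <;> omega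

theorem min_sigmaTilde_lt_max {j : ℕ} (hj : j ≠ 0) :
    min (sigmaTilde k σ (j - 1)) (sigmaTilde k σ j) <
      max (sigmaTilde k σ (j - 1)) (sigmaTilde k σ j) :=
  min_lt_max.2 ((sigmaTilde_injective k σ).ne (by omega))

theorem towerTop_eq {j : ℕ} (hj : j ≠ 0) :
    towerTop k σ j = min (sigmaTilde k σ (j - 1)) (sigmaTilde k σ j) + 1 := by
  rw [towerTop, setOf_MmatN_ne_zero]
  exact IsLeast.csInf_eq
    ⟨⟨Nat.lt_succ_self _, min_sigmaTilde_lt_max k σ hj⟩, fun _ hi => hi.1⟩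

-- In the absent column `0` both sides are the junk value `0`, as `sSup ∅ = 0` and `0 - 1 = 0`.
theorem towerBot_eq (j : ℕ) :
    towerBot k σ j = max (sigmaTilde k σ (j - 1)) (sigmaTilde k σ j) := by
  rw [towerBot, setOf_MmatN_ne_zero]
  rcases eq_or_ne j 0 with rfl | hj
  · simp
  · exact csSup_Ioc (min_sigmaTilde_lt_max k σ hj)

theorem towerTop_le_towerBot {j : ℕ} (hj : j ≠ 0) : towerTop k σ j ≤ towerBot k σ j := by
  rw [towerTop_eq k σ hj, towerBot_eq]
  exact min_sigmaTilde_lt_max k σ hj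

theorem isNeighborValue_towerBot_towerTop {j : ℕ} (hj : j ≠ 0) :
    IsNeighborValue k σ (towerBot k σ j) (towerTop k σ j - 1) := by
  obtain ⟨j, rfl⟩ := Nat.exists_eq_succ_of_ne_zero hj
  rw [towerTop_eq k σ hj, towerBot_eq, Nat.add_sub_cancel, Nat.succ_sub_one]
  have hnbr := isNeighborValue_sigmaTilde_succ k σ j
  rcases le_total (sigmaTilde k σ j) (sigmaTilde k σ (j + 1)) with hle | hle
  · rw [max_eq_right hle, min_eq_left hle]
    exact hnbr.symm
  · rw [max_eq_left hle, min_eq_right hle]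
    exact hnbr

end Towers

theorem towerBot_eq_of_isValleyAt {j : ℕ} (hj : IsValleyAt k σ j) :
    towerBot k σ j = sigmaTilde k σ j ∧ towerBot k σ (j + 1) = sigmaTilde k σ j := by
  obtain ⟨hleft, hright⟩ := max_lt_iff.1 hj
  rw [towerBot_eq, towerBot_eq, Nat.add_sub_cancel]
  exact ⟨max_eq_right hleft.le, max_eq_left hright.le⟩

theorem exists_towerBot_eq_of_not_isPeakAt {j : ℕ} (hj : ¬IsPeakAt k σ j) :
    ∃ c, towerBot k σ c = sigmaTilde k σ j := by
  rw [IsPeakAt, lt_min_iff, not_and_or, not_lt, not_lt] at hj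
  rcases hj with hleft | hright
  · exact ⟨j, by rw [towerBot_eq, max_eq_right hleft]⟩
  · exact ⟨j + 1, by rw [towerBot_eq, Nat.add_sub_cancel, max_eq_left hright]⟩

theorem towerBot_pivotCol {i : ℕ} (hi : ¬IsPeakAt k σ (sigmaTilde k σ⁻¹ i)) :
    towerBot k σ (pivotCol k σ i) = i := by
  by_cases hv : IsValleyAt k σ (sigmaTilde k σ⁻¹ i)
  · obtain ⟨hleft, hright⟩ := towerBot_eq_of_isValleyAt hv
    rw [sigmaTilde_sigmaTilde_inv] at hleft hright
    rw [pivotCol, if_pos hv]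
    split_ifs
    exacts [hleft, hright]
  · rw [pivotCol, if_neg hv]
    refine Nat.sInf_mem (s := {c | towerBot k σ c = i}) ?_
    simpa only [Set.Nonempty, Set.mem_ofPred_eq, sigmaTilde_sigmaTilde_inv] using
      exists_towerBot_eq_of_not_isPeakAt hi

theorem pivotCol_ne_zero {i : ℕ} (hi : i ≠ 0) (hp : ¬IsPeakAt k σ (sigmaTilde k σ⁻¹ i)) :
    pivotCol k σ i ≠ 0 := by
  intro h0
  have hbot := towerBot_pivotCol hp
  rw [h0, towerBot_eq] at hbot
  exact hi (by simpa using hbot.symm)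

theorem IsValleyAt.not_isPeakAt {j : ℕ} (hj : IsValleyAt k σ j) : ¬IsPeakAt k σ j := by
  rw [IsValleyAt] at hj
  rw [IsPeakAt]
  omega

theorem IsValleyAt.ne_zero {j : ℕ} (hj : IsValleyAt k σ j) : j ≠ 0 := by
  rintro rfl
  simp [IsValleyAt] at hj

theorem IsValleyAt.towerTop_ne {j : ℕ} (hj : IsValleyAt k σ j) :
    towerTop k σ j ≠ towerTop k σ (j + 1) := by
  obtain ⟨hleft, hright⟩ := max_lt_iff.1 hj
  rw [towerTop_eq k σ hj.ne_zero, towerTop_eq k σ j.add_one_ne_zero, Nat.add_sub_cancel,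
    min_eq_left hleft.le, min_eq_right hright.le]
  exact fun heq => absurd (sigmaTilde_injective k σ (Nat.succ_injective heq)) (by omega)

theorem towerTop_pivotCol_lt_of_isValleyAt {i : ℕ}
    (hi : IsValleyAt k σ (sigmaTilde k σ⁻¹ i)) : towerTop k σ (pivotCol k σ i) < i := by
  obtain ⟨hbot_left, hbot_right⟩ := towerBot_eq_of_isValleyAt hi
  have hleft := towerTop_le_towerBot k σ hi.ne_zero
  have hright := towerTop_le_towerBot k σ (sigmaTilde k σ⁻¹ i).add_one_ne_zero
  rw [hbot_left, sigmaTilde_sigmaTilde_inv] at hleft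
  rw [hbot_right, sigmaTilde_sigmaTilde_inv] at hright
  rw [pivotCol, if_pos hi]
  split_ifs with hlt
  · exact hlt.trans_le hright
  · exact (lt_of_le_of_ne (not_lt.1 hlt) hi.towerTop_ne.symm).trans_le hleft

theorem isNeighborValue_towerTop_pivotCol {i : ℕ} (hi : i ≠ 0)
    (hp : ¬IsPeakAt k σ (sigmaTilde k σ⁻¹ i)) :
    IsNeighborValue k σ i (towerTop k σ (pivotCol k σ i) - 1) := by
  simpa only [towerBot_pivotCol hp] using
    isNeighborValue_towerBot_towerTop k σ (pivotCol_ne_zero hi hp)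

theorem towerTop_pivotCol_lt_of_mem_slopeSet {i : ℕ} (hi : i ∈ slopeSet k σ) :
    towerTop k σ (pivotCol k σ i) < i := by
  obtain ⟨hi1, -, hpeak, hvalley, hladder⟩ := hi
  have hi0 : i ≠ 0 := Nat.one_le_iff_ne_zero.1 hi1
  have hle := towerTop_le_towerBot k σ (pivotCol_ne_zero hi0 hpeak)
  rw [towerBot_pivotCol hpeak] at hle
  refine lt_of_le_of_ne hle fun heq => hladder ?_
  have hnbr := isNeighborValue_towerTop_pivotCol hi0 hpeak
  rw [heq] at hnbr
  exact (isLadderAt_iff_isNeighborValue hi0).2 ⟨hnbr, hvalley⟩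

theorem towerTop_pivotCol_lt {i : ℕ} (hi : i ∈ valleySet k σ ∪ slopeSet k σ) :
    towerTop k σ (pivotCol k σ i) < i :=
  hi.elim (fun hv => towerTop_pivotCol_lt_of_isValleyAt hv.2.2)
    towerTop_pivotCol_lt_of_mem_slopeSet

theorem mem_Icc_of_mem_valleySet_union_slopeSet {i : ℕ}
    (hi : i ∈ valleySet k σ ∪ slopeSet k σ) : i ∈ Set.Icc 1 k :=
  hi.elim (fun hv => ⟨hv.1, hv.2.1⟩) fun hs => ⟨hs.1, hs.2.1⟩

theorem not_isPeakAt_of_mem_valleySet_union_slopeSet {i : ℕ}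
    (hi : i ∈ valleySet k σ ∪ slopeSet k σ) : ¬IsPeakAt k σ (sigmaTilde k σ⁻¹ i) :=
  hi.elim (fun hv => hv.2.2.not_isPeakAt) fun hs => hs.2.2.1

theorem mem_peakSet_or_isNeighborValue_pred {i : ℕ} (hi : i ≠ 0) (hik : i ≤ k)
    (hvs : i ∉ valleySet k σ ∪ slopeSet k σ) :
    i ∈ peakSet k σ ∨ IsNeighborValue k σ i (i - 1) := by
  have hi1 : 1 ≤ i := Nat.one_le_iff_ne_zero.2 hi
  by_contra! hnot
  have hvalley : ¬IsValleyAt k σ (sigmaTilde k σ⁻¹ i) := fun hv => hvs (.inl ⟨hi1, hik, hv⟩)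
  exact hvs (.inr ⟨hi1, hik, fun hp => hnot.1 ⟨hi1, hik, hp⟩, hvalley,
    fun hl => hnot.2 ((isLadderAt_iff_isNeighborValue hi).1 hl).1⟩)

theorem mem_peakSet_of_towerTop_pivotCol_notMem {n : ℕ}
    (hn : n ∈ valleySet k σ ∪ slopeSet k σ)
    (htop : towerTop k σ (pivotCol k σ n) ∉ valleySet k σ ∪ slopeSet k σ) :
    towerTop k σ (pivotCol k σ n) ∈ peakSet k σ ∨
      towerTop k σ (pivotCol k σ n) - 1 ∈ peakSet k σ := by
  obtain ⟨hn1, hnk⟩ := mem_Icc_of_mem_valleySet_union_slopeSet hn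
  have hn0 : n ≠ 0 := Nat.one_le_iff_ne_zero.1 hn1
  have hpeak := not_isPeakAt_of_mem_valleySet_union_slopeSet hn
  have hlt := towerTop_pivotCol_lt hn
  have htop0 : towerTop k σ (pivotCol k σ n) ≠ 0 := by
    rw [towerTop_eq k σ (pivotCol_ne_zero hn0 hpeak)]
    exact Nat.succ_ne_zero _
  have hnbr_n := isNeighborValue_towerTop_pivotCol hn0 hpeak
  refine (mem_peakSet_or_isNeighborValue_pred htop0 (hlt.le.trans hnk) htop).imp_right
    fun hnbr_top => ?_
  exact mem_peakSet_of_isNeighborValue (by omega) hnbr_top.symm hnbr_n.symm hlt.ne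
    (by omega) (by omega)

theorem nextVS_mem {h : ℕ} (hnext : ∃ h' ∈ valleySet k σ ∪ slopeSet k σ, h < h') :
    nextVS k σ h ∈ valleySet k σ ∪ slopeSet k σ :=
  (Nat.sInf_mem (s := {h' | h' ∈ valleySet k σ ∪ slopeSet k σ ∧ h < h'}) hnext).1

theorem notMem_of_lt_nextVS {h m : ℕ} (hm : h < m) (hlt : m < nextVS k σ h) :
    m ∉ valleySet k σ ∪ slopeSet k σ :=
  fun hvs => Nat.notMem_of_lt_sInf hlt ⟨hvs, hm⟩

theorem peak_between_uncovered_slope_and_next_general {h : ℕ} (hpeak : h ∉ peakSet k σ)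
    (hnext : ∃ h' ∈ valleySet k σ ∪ slopeSet k σ, h < h')
    (htop : h < towerTop k σ (pivotCol k σ (nextVS k σ h))) :
    ∃ m : ℕ, h < m ∧ m < nextVS k σ h ∧ m ∈ peakSet k σ := by
  have hmem := nextVS_mem hnext
  have hlt := towerTop_pivotCol_lt hmem
  rcases mem_peakSet_of_towerTop_pivotCol_notMem hmem (notMem_of_lt_nextVS htop hlt) with
    hp | hp
  · exact ⟨_, htop, hlt, hp⟩
  · have hne := ne_of_mem_of_not_mem hp hpeak
    exact ⟨_, by omega, by omega, hp⟩

end Development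

/-- Claim 2 in the proof of the paper's Lemma 8.4: if `h` is an uncovered slope index
which is not the largest element of `I_v ∪ I_s`, then there is a peak index strictly
between `h` and the next element of `I_v ∪ I_s` after `h`. -/
theorem peak_between_uncovered_slope_and_next
    (k : ℕ) (hk : 1 ≤ k) (σ : Equiv.Perm (Fin k)) (h : ℕ)
    (hus : h ∈ uncoveredSlopeSet k σ)
    (hnext : ∃ h' ∈ valleySet k σ ∪ slopeSet k σ, h < h') :
    ∃ m : ℕ, h < m ∧ m < nextVS k σ h ∧ m ∈ peakSet k σ :=
  peak_between_uncovered_slope_and_next_general (fun hp => hus.1.2.2.1 hp.2.2) hnext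
    (not_le.1 fun hle => hus.2 ⟨hus.1, hnext, hle⟩)
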